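/- In any skew lattice S, both band reducts are regular: for all x, y, z ∈ S, x∧y∧x∧z∧x = x∧y∧z∧x and x∨y∨x∨z∨x = x∨y∨z∨x. -/

import Mathlib

/-!
Call `p` below `x` when `x ⊔ p ⊔ x = x`. If `p` and `q` are below `x`, then `p ⊔ x` and `x ⊔ q` are
Green `R`- and `L`-equivalent to `x`, respectively, in the band `⊓`, so their meet is `x`. Replacing
the middle factor of `p ⊓ x ⊓ q` by `(p ⊔ x) ⊓ (x ⊔ q)` and absorbing on both sides gives
`p ⊓ x ⊓ q = p ⊓ q`. Regularity of `⊓` is the case `p = x ⊓ y`, `q = z ⊓ x`, and that of `⊔` is its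
dual.
-/

-- Clifford–Miller: `b * a` is an idempotent in `L_a ∩ R_b`, so `a * b` lies in `R_a ∩ L_b = H_x`.
theorem mul_eq_of_greenR_of_greenL {M : Type*} [Semigroup M] {a b x : M}
    (hxa : x * a = a) (hax : a * x = x) (hxb : x * b = x) (hbx : b * x = b)
    (hba : IsIdempotentElem (b * a)) : a * b = x :=
  calc a * b = x * a * (b * x) := by rw [hxa, hbx]
    _ = x * (a * b) * x := by simp only [mul_assoc]
    _ = x * b * (a * b) * (a * x) := by rw [hxb, hax]
    _ = x * (b * a * (b * a)) * x := by simp only [mul_assoc]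
    _ = x * (b * a) * x := by rw [hba.eq]
    _ = x * b * (a * x) := by simp only [mul_assoc]
    _ = x * (a * x) := by rw [hxb]
    _ = x := by rw [← mul_assoc, hxa, hax]

/-- A skew lattice: two band operations linked by one-sided absorption laws, neither of them assumed
commutative. The operations `∧` and `∨` are written `⊓` and `⊔`; no order is part of the data. -/
class SkewLattice (α : Type*) extends Min α, Max α where
  inf_idem (x : α) : x ⊓ x = x
  sup_idem (x : α) : x ⊔ x = x
  inf_assoc (x y z : α) : x ⊓ y ⊓ z = x ⊓ (y ⊓ z)
  sup_assoc (x y z : α) : x ⊔ y ⊔ z = x ⊔ (y ⊔ z)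
  inf_sup_self_left (x y : α) : x ⊓ (x ⊔ y) = x
  inf_sup_self_right (x y : α) : (y ⊔ x) ⊓ x = x
  sup_inf_self_left (x y : α) : x ⊔ (x ⊓ y) = x
  sup_inf_self_right (x y : α) : (y ⊓ x) ⊔ x = x

namespace SkewLattice

open OrderDual

variable {α : Type*} [SkewLattice α] {p q x : α}

instance : SkewLattice αᵒᵈ where
  inf_idem := sup_idem (α := α)
  sup_idem := inf_idem (α := α)
  inf_assoc := sup_assoc (α := α)
  sup_assoc := inf_assoc (α := α)
  inf_sup_self_left := sup_inf_self_left (α := α)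
  inf_sup_self_right := sup_inf_self_right (α := α)
  sup_inf_self_left := inf_sup_self_left (α := α)
  sup_inf_self_right := inf_sup_self_right (α := α)

/-- The natural preorder of a skew lattice, written `p ≼ x` and expressed through `⊔`; it allows the
middle factor `x` of `p ⊓ x ⊓ q` to be cancelled. -/
def NaturalLE (p x : α) : Prop := x ⊔ p ⊔ x = x

local infix:50 " ≼ " => NaturalLE

theorem inf_naturalLE_left (x y : α) : x ⊓ y ≼ x :=
  calc x ⊔ (x ⊓ y) ⊔ x = x ⊔ x := by rw [sup_inf_self_left]
    _ = x := sup_idem x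

theorem inf_naturalLE_right (x y : α) : x ⊓ y ≼ y :=
  calc y ⊔ (x ⊓ y) ⊔ y = y ⊔ y := by rw [sup_assoc, sup_inf_self_right]
    _ = y := sup_idem y

theorem NaturalLE.inf_sup_right (hp : p ≼ x) : x ⊓ (p ⊔ x) = p ⊔ x :=
  calc x ⊓ (p ⊔ x) = (x ⊔ p ⊔ x) ⊓ (p ⊔ x) := by rw [hp]
    _ = (x ⊔ (p ⊔ x)) ⊓ (p ⊔ x) := by rw [sup_assoc]
    _ = p ⊔ x := inf_sup_self_right _ _

theorem NaturalLE.sup_inf_left (hq : q ≼ x) : (x ⊔ q) ⊓ x = x ⊔ q :=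
  calc (x ⊔ q) ⊓ x = (x ⊔ q) ⊓ (x ⊔ q ⊔ x) := by rw [hq]
    _ = x ⊔ q := inf_sup_self_left _ _

theorem NaturalLE.sup_inf_sup (hp : p ≼ x) (hq : q ≼ x) : (p ⊔ x) ⊓ (x ⊔ q) = x :=
  let _ : Semigroup α := { mul := (· ⊓ ·), mul_assoc := inf_assoc }
  mul_eq_of_greenR_of_greenL hp.inf_sup_right (inf_sup_self_right x p)
    (inf_sup_self_left x q) hq.sup_inf_left (inf_idem _)

theorem NaturalLE.inf_inf_cancel_middle (hp : p ≼ x) (hq : q ≼ x) : p ⊓ x ⊓ q = p ⊓ q :=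
  calc p ⊓ x ⊓ q = p ⊓ ((p ⊔ x) ⊓ (x ⊔ q)) ⊓ q := by rw [hp.sup_inf_sup hq]
    _ = p ⊓ (p ⊔ x) ⊓ ((x ⊔ q) ⊓ q) := by simp only [inf_assoc]
    _ = p ⊓ q := by rw [inf_sup_self_left, inf_sup_self_right]

theorem inf_regular (x y z : α) : x ⊓ y ⊓ x ⊓ z ⊓ x = x ⊓ y ⊓ z ⊓ x :=
  calc x ⊓ y ⊓ x ⊓ z ⊓ x = x ⊓ y ⊓ x ⊓ (z ⊓ x) := inf_assoc _ _ _
    _ = x ⊓ y ⊓ (z ⊓ x) :=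
      (inf_naturalLE_left x y).inf_inf_cancel_middle (inf_naturalLE_right z x)
    _ = x ⊓ y ⊓ z ⊓ x := (inf_assoc _ _ _).symm

theorem sup_regular (x y z : α) : x ⊔ y ⊔ x ⊔ z ⊔ x = x ⊔ y ⊔ z ⊔ x :=
  inf_regular (toDual x) (toDual y) (toDual z)

end SkewLattice

/-- Both band reducts of a skew lattice are regular. -/
theorem skewLattice_regular {S : Type*} (wedge vee : S → S → S)
    (wedge_idem : ∀ x : S, wedge x x = x)
    (vee_idem : ∀ x : S, vee x x = x)
    (wedge_assoc : ∀ x y z : S, wedge (wedge x y) z = wedge x (wedge y z))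
    (vee_assoc : ∀ x y z : S, vee (vee x y) z = vee x (vee y z))
    (abs₁ : ∀ x y : S, wedge x (vee x y) = x)
    (abs₂ : ∀ x y : S, wedge (vee y x) x = x)
    (abs₃ : ∀ x y : S, vee x (wedge x y) = x)
    (abs₄ : ∀ x y : S, vee (wedge y x) x = x) :
    ∀ x y z : S,
      wedge (wedge (wedge (wedge x y) x) z) x = wedge (wedge (wedge x y) z) x ∧
      vee (vee (vee (vee x y) x) z) x = vee (vee (vee x y) z) x := by
  let _ : SkewLattice S :=
    { min := wedge
      max := vee
      inf_idem := wedge_idem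
      sup_idem := vee_idem
      inf_assoc := wedge_assoc
      sup_assoc := vee_assoc
      inf_sup_self_left := abs₁
      inf_sup_self_right := abs₂
      sup_inf_self_left := abs₃
      sup_inf_self_right := abs₄ }
  exact fun x y z => ⟨SkewLattice.inf_regular x y z, SkewLattice.sup_regular x y z⟩
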